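/- Let A be a commutative ring, n ≥ 1, and work in B = A[x_{01},x_{11},…,x_{0n},x_{1n}]. Let F(Z) = Σ_{k=0}^n (−1)^k p_k(x) Z^{n−k} be the polynomial over B whose coefficients are (up to sign) the elementary homogeneous symmetric polynomials, and let F′ be its formal derivative. Then Res_{n,n−1}(F, F′) = (−1)^{n(n−1)/2} · p_0(x) · ∏_{1 ≤ i < j ≤ n} (x_{1i} x_{0j} − x_{0i} x_{1j})^2. -/

import Mathlib

open MvPolynomial Polynomial

/-- The Sylvester matrix of `f` and `g`, viewed with formal degrees `n` and `m`:
an `(m + n) × (m + n)` matrix whose first `m` rows hold shifted coefficients of `f`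
(from the coefficient of `Z^n` down to the constant term) and whose last `n` rows
hold shifted coefficients of `g`. -/
noncomputable def sylvester {R : Type*} [CommRing R] (n m : ℕ) (f g : R[X]) :
    Matrix (Fin (m + n)) (Fin (m + n)) R :=
  Matrix.of fun i j =>
    Fin.addCases
      (fun i₀ : Fin m =>
        if (i₀ : ℕ) ≤ (j : ℕ) ∧ (j : ℕ) ≤ (i₀ : ℕ) + n then
          f.coeff (n - ((j : ℕ) - (i₀ : ℕ))) else 0)
      (fun i₁ : Fin n =>
        if (i₁ : ℕ) ≤ (j : ℕ) ∧ (j : ℕ) ≤ (i₁ : ℕ) + m then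
          g.coeff (m - ((j : ℕ) - (i₁ : ℕ))) else 0)
      i

/-- The resultant `Res_{n,m}(f, g)`: the determinant of the Sylvester matrix of `f` and `g`
viewed with formal degrees `n` and `m`. -/
noncomputable def res {R : Type*} [CommRing R] (n m : ℕ) (f g : R[X]) : R :=
  (sylvester n m f g).det

/-- The elementary homogeneous symmetric polynomial `p_k` in the `2n` variables
`x_{01}, x_{11}, …, x_{0n}, x_{1n}` (variable `(i, 0)` is `x_{0i}` and `(i, 1)` is `x_{1i}`). -/
noncomputable def ehsp (A : Type*) [CommRing A] (n : ℕ) (k : ℕ) :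
    MvPolynomial (Fin n × Fin 2) A :=
  ∑ S ∈ Finset.powersetCard k (Finset.univ : Finset (Fin n)),
    (∏ i ∈ Sᶜ, X (i, (0 : Fin 2))) * ∏ i ∈ S, X (i, (1 : Fin 2))

/-!
The polynomial `F` factors as `∏ lᵢ` with `lᵢ = x₀ᵢ Z - x₁ᵢ`. Resultants with formal degrees are
multiplicative over any commutative ring, so `Res(F, F')` is the product of the `Res(lᵢ, F')`.
Writing `F = lᵢ Qᵢ`, the term `lᵢ Qᵢ'` of `F' = lᵢ' Qᵢ + lᵢ Qᵢ'` does not affect `Res(lᵢ, F')`.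
Hence `Res(lᵢ, F') = Res(lᵢ, lᵢ') ∏_{j ≠ i} Res(lᵢ, lⱼ)`, where `Res(lᵢ, lᵢ') = x₀ᵢ` and
`Res(lᵢ, lⱼ)` is a `2 × 2` determinant. Pairing `(i, j)` with `(j, i)` gives the squares and one
sign for each `i < j`.
-/

section Sylvester

variable {R : Type*} [CommRing R]

-- Mathlib's matrix has the shifted coefficients of `g`, then those of `f`, as its columns, each
-- starting from the constant term.
lemma sylvester_eq_submatrix_transpose (n m : ℕ) (f g : R[X]) :
    _root_.sylvester n m f g =
      (Polynomial.sylvester f g n m).transpose.submatrix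
        (Fin.revPerm.trans (finCongr (add_comm m n)))
        (Fin.revPerm.trans (finCongr (add_comm m n))) := by
  have rev_castAdd (i : Fin m) :
      Fin.cast (add_comm m n) (Fin.castAdd n i).rev = Fin.natAdd n i.rev := by
    ext
    simp only [Fin.val_cast, Fin.val_rev, Fin.val_castAdd, Fin.val_natAdd]
    omega
  have rev_natAdd (i : Fin n) :
      Fin.cast (add_comm m n) (Fin.natAdd m i).rev = Fin.castAdd m i.rev := by
    ext
    simp only [Fin.val_cast, Fin.val_rev, Fin.val_castAdd, Fin.val_natAdd]
    omega
  ext i j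
  induction i using Fin.addCases
  all_goals
    simp only [_root_.sylvester, Polynomial.sylvester, Matrix.submatrix_apply,
      Matrix.transpose_apply, Matrix.of_apply, Equiv.trans_apply, Fin.revPerm_apply,
      finCongr_apply, rev_castAdd, rev_natAdd, Fin.addCases_left, Fin.addCases_right,
      Set.mem_Icc, Fin.val_cast, Fin.val_rev]
    grind

lemma res_eq_resultant (n m : ℕ) (f g : R[X]) : res n m f g = resultant f g n m := by
  rw [res, sylvester_eq_submatrix_transpose, Matrix.det_submatrix_equiv_self,
    Matrix.det_transpose, resultant]

end Sylvester

section FormalDegree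

variable {R ι : Type*} [CommRing R]

lemma resultant_mul_left_of_natDegree_le {f₁ f₂ g : R[X]} {m₁ m₂ n : ℕ}
    (hf₁ : f₁.natDegree ≤ m₁) (hf₂ : f₂.natDegree ≤ m₂) (hg : g.natDegree ≤ n) :
    resultant (f₁ * f₂) g (m₁ + m₂) n = resultant f₁ g m₁ n * resultant f₂ g m₂ n := by
  obtain ⟨k₁, rfl⟩ := Nat.exists_eq_add_of_le hf₁
  obtain ⟨k₂, rfl⟩ := Nat.exists_eq_add_of_le hf₂
  rw [add_add_add_comm, resultant_add_left_deg _ _ _ _ _ natDegree_mul_le,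
    resultant_mul_left _ _ _ _ hg, resultant_add_left_deg _ _ _ _ _ le_rfl,
    resultant_add_left_deg _ _ _ _ _ le_rfl]
  ring

lemma resultant_mul_right_of_natDegree_le {f g₁ g₂ : R[X]} {m n₁ n₂ : ℕ}
    (hf : f.natDegree ≤ m) (hg₁ : g₁.natDegree ≤ n₁) (hg₂ : g₂.natDegree ≤ n₂) :
    resultant f (g₁ * g₂) m (n₁ + n₂) = resultant f g₁ m n₁ * resultant f g₂ m n₂ := by
  rw [resultant_comm, resultant_mul_left_of_natDegree_le hg₁ hg₂ hf, resultant_comm f g₁,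
    resultant_comm f g₂]
  ring

lemma natDegree_prod_le_sum {s : Finset ι} {f : ι → R[X]} {d : ι → ℕ}
    (hf : ∀ i ∈ s, (f i).natDegree ≤ d i) : (∏ i ∈ s, f i).natDegree ≤ ∑ i ∈ s, d i :=
  (natDegree_prod_le s f).trans (Finset.sum_le_sum hf)

lemma resultant_prod_left_of_natDegree_le {s : Finset ι} {f : ι → R[X]} {d : ι → ℕ}
    {g : R[X]} {n : ℕ} (hf : ∀ i ∈ s, (f i).natDegree ≤ d i) (hg : g.natDegree ≤ n) :
    resultant (∏ i ∈ s, f i) g (∑ i ∈ s, d i) n = ∏ i ∈ s, resultant (f i) g (d i) n := by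
  induction s using Finset.cons_induction with
  | empty => simp
  | cons i s hi ih =>
    rw [Finset.forall_mem_cons] at hf
    rw [Finset.prod_cons, Finset.sum_cons, Finset.prod_cons,
      resultant_mul_left_of_natDegree_le hf.1 (natDegree_prod_le_sum hf.2) hg, ih hf.2]

lemma resultant_prod_right_of_natDegree_le {s : Finset ι} {f : R[X]} {m : ℕ} {g : ι → R[X]}
    {d : ι → ℕ} (hf : f.natDegree ≤ m) (hg : ∀ i ∈ s, (g i).natDegree ≤ d i) :
    resultant f (∏ i ∈ s, g i) m (∑ i ∈ s, d i) = ∏ i ∈ s, resultant f (g i) m (d i) := by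
  simp_rw [resultant_comm f, resultant_prod_left_of_natDegree_le hg hf,
    Finset.prod_mul_distrib, Finset.prod_pow_eq_pow_sum, Finset.mul_sum]

lemma resultant_derivative_mul {f q : R[X]} {m k : ℕ} (hm : 0 < m) (hf : f.natDegree ≤ m)
    (hq : q.natDegree ≤ k) :
    resultant f (derivative (f * q)) m (m + k - 1) =
      resultant f (derivative f) m (m - 1) * resultant f q m k := by
  have hf' : (derivative f).natDegree ≤ m - 1 :=
    (natDegree_derivative_le f).trans (Nat.sub_le_sub_right hf 1)
  have drop_term : resultant f (derivative f * q + f * derivative q) m (m + k - 1) =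
      resultant f (derivative f * q) m (m + k - 1) := by
    obtain rfl | hk := k.eq_zero_or_pos
    · rw [derivative_of_natDegree_zero (Nat.le_zero.mp hq), mul_zero, add_zero]
    · have hq' := natDegree_derivative_le q
      exact resultant_add_mul_right _ _ _ _ _ (by omega) hf
  rw [derivative_mul, drop_term, Nat.sub_add_comm hm, resultant_mul_right_of_natDegree_le hf hf' hq]

theorem resultant_derivative_prod [DecidableEq ι] {s : Finset ι} {f : ι → R[X]} {d : ι → ℕ}
    (hd : ∀ i ∈ s, 0 < d i) (hf : ∀ i ∈ s, (f i).natDegree ≤ d i) :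
    resultant (∏ i ∈ s, f i) (derivative (∏ i ∈ s, f i)) (∑ i ∈ s, d i) (∑ i ∈ s, d i - 1) =
      (∏ i ∈ s, resultant (f i) (derivative (f i)) (d i) (d i - 1)) *
        ∏ i ∈ s, ∏ j ∈ s.erase i, resultant (f i) (f j) (d i) (d j) := by
  have hF' : (derivative (∏ i ∈ s, f i)).natDegree ≤ ∑ i ∈ s, d i - 1 :=
    (natDegree_derivative_le _).trans (Nat.sub_le_sub_right (natDegree_prod_le_sum hf) 1)
  rw [resultant_prod_left_of_natDegree_le hf hF', ← Finset.prod_mul_distrib]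
  refine Finset.prod_congr rfl fun i hi ↦ ?_
  have hf_erase : ∀ j ∈ s.erase i, (f j).natDegree ≤ d j :=
    fun j hj ↦ hf j (Finset.mem_of_mem_erase hj)
  rw [← Finset.mul_prod_erase s f hi, ← Finset.add_sum_erase s d hi,
    resultant_derivative_mul (hd i hi) (hf i hi) (natDegree_prod_le_sum hf_erase),
    resultant_prod_right_of_natDegree_le (hf i hi) hf_erase]

end FormalDegree

lemma prod_prod_erase_eq_prod_filter_lt {ι M : Type*} [LinearOrder ι] [CommMonoid M]
    (s : Finset ι) (f : ι → ι → M) :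
    ∏ i ∈ s, ∏ j ∈ s.erase i, f i j = ∏ p ∈ s ×ˢ s with p.1 < p.2, f p.1 p.2 * f p.2 p.1 := by
  have split_erase (i : ι) : ∏ j ∈ s.erase i, f i j =
      (∏ j ∈ s with i < j, f i j) * ∏ j ∈ s with j < i, f i j := by
    rw [← Finset.prod_union (by grind [Finset.disjoint_left])]
    exact Finset.prod_congr (by grind) fun _ _ ↦ rfl
  simp_rw [split_erase, Finset.prod_mul_distrib, Finset.prod_filter, Finset.prod_product]
  rw [Finset.prod_comm (f := fun i j ↦ if j < i then f i j else 1)]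

section LinearFactor

variable {R ι : Type*} [CommRing R]

/-- The linear polynomial `a Z - b`, i.e. the dehomogenization of the linear form with projective
root `[b : a]`; the leading coefficient `a` may vanish, so `1` is only its formal degree. -/
noncomputable def linearFactor (a b : R) : R[X] :=
  Polynomial.C a * Polynomial.X - Polynomial.C b

lemma natDegree_linearFactor_le (a b : R) : (linearFactor a b).natDegree ≤ 1 := by
  rw [linearFactor]
  compute_degree

lemma resultant_linearFactor_derivative (a b : R) :
    resultant (linearFactor a b) (derivative (linearFactor a b)) 1 0 = a := by
  simp [linearFactor]

lemma resultant_linearFactor (a b c d : R) :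
    resultant (linearFactor a b) (linearFactor c d) 1 1 = b * c - a * d := by
  have sylvester_eq :
      Polynomial.sylvester (linearFactor a b) (linearFactor c d) 1 1 = !![-d, -b; c, a] := by
    ext i j
    fin_cases i <;> fin_cases j <;> simp [linearFactor, Polynomial.sylvester, Fin.addCases]
  rw [resultant, sylvester_eq, Matrix.det_fin_two_of]
  ring

theorem resultant_derivative_prod_linearFactor [LinearOrder ι] (s : Finset ι) (a b : ι → R) :
    resultant (∏ i ∈ s, linearFactor (a i) (b i)) (derivative (∏ i ∈ s, linearFactor (a i) (b i)))
        s.card (s.card - 1) =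
      (-1) ^ s.card.choose 2 * (∏ i ∈ s, a i) *
        ∏ p ∈ s ×ˢ s with p.1 < p.2, (b p.1 * a p.2 - a p.1 * b p.2) ^ 2 := by
  have expand := resultant_derivative_prod (s := s) (f := fun i ↦ linearFactor (a i) (b i))
    (d := fun _ ↦ 1) (fun _ _ ↦ one_pos) fun i _ ↦ natDegree_linearFactor_le (a i) (b i)
  simp only [Finset.sum_const, smul_eq_mul, mul_one, Nat.sub_self,
    resultant_linearFactor_derivative, resultant_linearFactor,
    prod_prod_erase_eq_prod_filter_lt] at expand
  have pair_eq_neg_sq (p : ι × ι) :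
      (b p.1 * a p.2 - a p.1 * b p.2) * (b p.2 * a p.1 - a p.2 * b p.1) =
        -1 * (b p.1 * a p.2 - a p.1 * b p.2) ^ 2 := by ring
  rw [expand]
  simp_rw [pair_eq_neg_sq]
  rw [Finset.prod_mul_distrib, Finset.prod_const, Finset.card_product_filter_lt, mul_left_comm,
    mul_assoc]

lemma prod_linearFactor_eq_sum [DecidableEq ι] (s : Finset ι) (a b : ι → R) :
    ∏ i ∈ s, linearFactor (a i) (b i) =
      ∑ k ∈ Finset.range (s.card + 1),
        Polynomial.C ((-1) ^ k * ∑ S ∈ s.powersetCard k, (∏ i ∈ s \ S, a i) * ∏ i ∈ S, b i) *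
          Polynomial.X ^ (s.card - k) := by
  simp only [linearFactor]
  rw [Finset.prod_sub, Finset.sum_powerset]
  refine Finset.sum_congr rfl fun k _ ↦ ?_
  rw [Finset.mul_sum, map_sum, Finset.sum_mul]
  refine Finset.sum_congr rfl fun S hS ↦ ?_
  obtain ⟨hSs, rfl⟩ := Finset.mem_powersetCard.mp hS
  rw [Finset.prod_mul_distrib, Finset.prod_const, Finset.card_sdiff_of_subset hSs]
  simp only [map_mul, map_pow, map_neg, map_one, map_prod]
  ring

end LinearFactor

section Ehsp

variable (A : Type*) [CommRing A] (n : ℕ)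

lemma sum_ehsp_eq_prod_linearFactor :
    ∑ k : Fin (n + 1),
        Polynomial.C ((-1 : MvPolynomial (Fin n × Fin 2) A) ^ (k : ℕ) * ehsp A n k) *
          Polynomial.X ^ (n - (k : ℕ)) =
      ∏ i : Fin n, linearFactor (X (i, 0)) (X (i, 1)) := by
  rw [prod_linearFactor_eq_sum, Finset.card_univ, Fintype.card_fin,
    Fin.sum_univ_eq_sum_range fun k ↦
      Polynomial.C ((-1) ^ k * ehsp A n k) * Polynomial.X ^ (n - k)]
  simp only [ehsp, Finset.compl_eq_univ_sdiff]

lemma ehsp_zero : ehsp A n 0 = ∏ i, X (i, 0) := by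
  simp [ehsp]

end Ehsp

/-- Let `F(Z) = Σ_{k=0}^n (−1)^k p_k(x) Z^{n−k}` over
`B = A[x_{01},…,x_{1n}]` and let `F′` be its formal derivative. Then
`Res_{n,n−1}(F, F′) = (−1)^{n(n−1)/2} p_0(x) ∏_{i<j} (x_{1i}x_{0j} − x_{0i}x_{1j})^2`. -/
theorem res_ehsp_derivative (A : Type*) [CommRing A] (n : ℕ) (hn : 1 ≤ n) :
    res n (n - 1)
        (∑ k : Fin (n + 1),
          Polynomial.C ((-1 : MvPolynomial (Fin n × Fin 2) A) ^ (k : ℕ) * ehsp A n (k : ℕ)) *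
            Polynomial.X ^ (n - (k : ℕ)))
        (derivative (∑ k : Fin (n + 1),
          Polynomial.C ((-1 : MvPolynomial (Fin n × Fin 2) A) ^ (k : ℕ) * ehsp A n (k : ℕ)) *
            Polynomial.X ^ (n - (k : ℕ)))) =
      (-1 : MvPolynomial (Fin n × Fin 2) A) ^ (n * (n - 1) / 2) * ehsp A n 0 *
        ∏ p ∈ Finset.univ.filter (fun p : Fin n × Fin n => p.1 < p.2),
          (X (p.1, (1 : Fin 2)) * X (p.2, (0 : Fin 2)) -
            X (p.1, (0 : Fin 2)) * X (p.2, (1 : Fin 2))) ^ 2 := by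
  have resultant_prod := resultant_derivative_prod_linearFactor (Finset.univ : Finset (Fin n))
    (fun i ↦ (X (i, 0) : MvPolynomial (Fin n × Fin 2) A)) fun i ↦ X (i, 1)
  rw [Finset.card_univ, Fintype.card_fin, Nat.choose_two_right, Finset.univ_product_univ]
    at resultant_prod
  rw [res_eq_resultant, sum_ehsp_eq_prod_linearFactor, ehsp_zero, resultant_prod]
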